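/- Let ν ∈ (0,1/2]. The infimum, over all smooth not identically zero functions u : (0,π) × ℝ → ℂ that are 2π-periodic in the second variable θ and have finite magnetic energy, of the quotient Q[u] = (∫₀^{2π} ∫₀^π (|∂_r u(r,θ)|² + |∂_θ u(r,θ) − iν u(r,θ)|²/sin²(r)) sin(r) dr dθ) / (∫₀^{2π} ∫₀^π |u(r,θ)|² sin(r) dr dθ) equals ν(ν+1), and it is attained by the function u(r,θ) = (sin r)^ν. -/

import Mathlib

open MeasureTheory Real Set Filter

/-- The integrand of the magnetic energy in geodesic polar coordinates `(r, θ)`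
on the round sphere, for the Aharonov–Bohm potential `A = ν dθ`. -/
noncomputable def magEnergyIntegrand (ν : ℝ) (u : ℝ → ℝ → ℂ) (p : ℝ × ℝ) : ℝ :=
  (‖deriv (fun s => u s p.2) p.1‖ ^ 2
      + ‖deriv (fun t => u p.1 t) p.2 - Complex.I * (ν : ℂ) * u p.1 p.2‖ ^ 2
          / Real.sin p.1 ^ 2)
    * Real.sin p.1

/-- Admissible functions on the polar coordinate rectangle `(0, R) × ℝ`:
smooth, `2π`-periodic in `θ`, not identically zero, with finite magnetic energy
(and finite `L²`-norm). -/
def MagAdmissible (R ν : ℝ) (u : ℝ → ℝ → ℂ) : Prop :=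
  ContDiffOn ℝ (⊤ : ℕ∞) (Function.uncurry u) (Ioo 0 R ×ˢ (univ : Set ℝ)) ∧
  (∀ r θ, u r (θ + 2 * π) = u r θ) ∧
  (¬ ∀ r ∈ Ioo (0:ℝ) R, ∀ θ : ℝ, u r θ = 0) ∧
  IntegrableOn (magEnergyIntegrand ν u) (Ioo 0 R ×ˢ Ioo 0 (2 * π)) ∧
  IntegrableOn (fun p : ℝ × ℝ => ‖u p.1 p.2‖ ^ 2 * Real.sin p.1)
    (Ioo 0 R ×ˢ Ioo 0 (2 * π))

/-- The magnetic Rayleigh quotient in polar coordinates. -/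
noncomputable def magQuot (R ν : ℝ) (u : ℝ → ℝ → ℂ) : ℝ :=
  (∫ p in Ioo (0:ℝ) R ×ˢ Ioo (0:ℝ) (2 * π), magEnergyIntegrand ν u p) /
    ∫ p in Ioo (0:ℝ) R ×ˢ Ioo (0:ℝ) (2 * π), ‖u p.1 p.2‖ ^ 2 * Real.sin p.1

/-!
Expanding in Fourier series in `θ`, the operator `∂_θ - iν` acts on the `n`-th mode as `i(n - ν)`,
and `|n - ν| ≥ ν` for every integer `n` because `ν ≤ 1/2`. So on each parallel the angular energy
is at least `ν² ∫ |u|² / sin r`, and it remains to minimise the energy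
`∫ (|f'|² sin r + ν² |f|² / sin r) dr` along a meridian. Completing the square,
`|f'|² sin r + ν² |f|² / sin r` equals
`ν (ν + 1) |f|² sin r + |f' - ν cot r · f|² sin r + d/dr (ν cos r |f|²)`.
The last term integrates to zero: `cos r |f|²` has limits at both poles, and a nonzero limit would
contradict the integrability of `|f|² / sin r`. The square vanishes precisely when `f` is a multiple
of `(sin r)^ν`.
-/

open Asymptotics Topology

section BoundaryTerms

lemma eq_zero_of_tendsto_of_integrableOn_div {g w : ℝ → ℝ} {c L : ℝ} {s : Set ℝ} {l : Filter ℝ}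
    [NeBot l] [TendstoIxxClass Icc l l] (hlc : l ≤ 𝓝[≠] c) (hs : s ∈ l)
    (hw : w =O[l] (· - c)) (hw_ne : ∀ᶠ x in l, w x ≠ 0) (hg : Tendsto g l (𝓝 L))
    (hgw : IntegrableOn (fun x => g x / w x) s) : L = 0 := by
  by_contra hL
  have hderiv : ∀ᶠ x in l, HasDerivAt (fun x => Real.log (x - c)) (x - c)⁻¹ x := by
    filter_upwards [hlc self_mem_nhdsWithin] with x hx
    simpa using ((hasDerivAt_id x).sub_const c).log (sub_ne_zero.2 hx)
  have hlog : Tendsto (fun x => ‖Real.log (x - c)‖) l atTop := by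
    refine tendsto_abs_atBot_atTop.comp (Real.tendsto_log_nhdsNE_zero.comp ?_)
    rw [← sub_self c]
    exact (((hasDerivAt_id c).sub_const c).tendsto_nhdsNE one_ne_zero).mono_left hlc
  have hinv : (fun x => (x - c)⁻¹) =O[l] fun x => (w x)⁻¹ :=
    hw.inv_rev (hw_ne.mono fun x hx h => absurd h hx)
  have hone : (fun _ => (1 : ℝ)) =O[l] g :=
    (isBigO_const_const 1 hL l).trans ((isEquivalent_const_iff_tendsto hL).2 hg).symm.isBigO
  have hbound : (fun x => (x - c)⁻¹) =O[l] fun x => g x / w x := by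
    simpa only [one_mul, div_eq_mul_inv] using hone.mul hinv
  exact not_integrableOn_of_tendsto_norm_atTop_of_deriv_isBigO_filter l hs
    (hderiv.mono fun x hx => hx.differentiableAt) hlog
    (hbound.congr' (hderiv.mono fun x hx => hx.deriv.symm) EventuallyEq.rfl) hgw

lemma exists_continuousOn_Icc_eqOn_of_integrableOn_deriv {E : Type*} [NormedAddCommGroup E]
    [NormedSpace ℝ E] [CompleteSpace E] {g g' : ℝ → E} {a b : ℝ} (hab : a < b)
    (hg : ∀ x ∈ Ioo a b, HasDerivAt g (g' x) x) (hg' : IntegrableOn g' (Ioo a b)) :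
    ∃ G : ℝ → E, ContinuousOn G (Icc a b) ∧ EqOn G g (Ioo a b) := by
  obtain ⟨c, hc⟩ : (Ioo a b).Nonempty := nonempty_Ioo.2 hab
  have hint : IntervalIntegrable g' volume a b :=
    (intervalIntegrable_iff_integrableOn_Ioo_of_le hab.le).2 hg'
  refine ⟨fun x => g c + ∫ t in c..x, g' t, ?_, fun x hx => ?_⟩
  · rw [← uIcc_of_le hab.le]
    exact continuousOn_const.add (intervalIntegral.continuousOn_primitive_interval' hint
      (Ioo_subset_Icc_self.trans_eq (uIcc_of_le hab.le).symm hc))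
  · have hsub : uIcc c x ⊆ Ioo a b := ordConnected_Ioo.uIcc_subset hc hx
    have hftc : ∫ t in c..x, g' t = g x - g c :=
      intervalIntegral.integral_eq_sub_of_hasDerivAt (fun y hy => hg y (hsub hy))
        (hint.mono_set (hsub.trans (Ioo_subset_Icc_self.trans_eq (uIcc_of_le hab.le).symm)))
    simp only [hftc, add_sub_cancel]

lemma setIntegral_deriv_eq_zero_of_integrableOn_div {g g' w : ℝ → ℝ} {a b : ℝ} (hab : a < b)
    (hg : ∀ x ∈ Ioo a b, HasDerivAt g (g' x) x) (hg' : IntegrableOn g' (Ioo a b))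
    (hwa : DifferentiableAt ℝ w a) (hwa_zero : w a = 0)
    (hwb : DifferentiableAt ℝ w b) (hwb_zero : w b = 0)
    (hw_ne : ∀ x ∈ Ioo a b, w x ≠ 0)
    (hgw : IntegrableOn (fun x => g x / w x) (Ioo a b)) :
    ∫ x in Ioo a b, g' x = 0 := by
  obtain ⟨G, hG, hGg⟩ := exists_continuousOn_Icc_eqOn_of_integrableOn_deriv hab hg hg'
  have hGw : IntegrableOn (fun x => G x / w x) (Ioo a b) :=
    hgw.congr_fun (fun x hx => by simp only [hGg hx]) measurableSet_Ioo
  have hGa : G a = 0 := by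
    refine eq_zero_of_tendsto_of_integrableOn_div (l := 𝓝[>] a)
      (nhdsWithin_mono a fun x hx => ne_of_gt hx) (Ioo_mem_nhdsGT hab)
      ?_ (eventually_of_mem (Ioo_mem_nhdsGT hab) hw_ne) ?_ hGw
    · simpa [hwa_zero] using hwa.isBigO_sub.mono nhdsWithin_le_nhds
    · rw [← nhdsWithin_Ioo_eq_nhdsGT hab]
      exact (hG a (left_mem_Icc.2 hab.le)).mono Ioo_subset_Icc_self
  have hGb : G b = 0 := by
    refine eq_zero_of_tendsto_of_integrableOn_div (l := 𝓝[<] b)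
      (nhdsWithin_mono b fun x hx => ne_of_lt hx) (Ioo_mem_nhdsLT hab)
      ?_ (eventually_of_mem (Ioo_mem_nhdsLT hab) hw_ne) ?_ hGw
    · simpa [hwb_zero] using hwb.isBigO_sub.mono nhdsWithin_le_nhds
    · rw [← nhdsWithin_Ioo_eq_nhdsLT hab]
      exact (hG b (right_mem_Icc.2 hab.le)).mono Ioo_subset_Icc_self
  have hGderiv : ∀ x ∈ Ioo a b, HasDerivAt G (g' x) x := fun x hx =>
    (hg x hx).congr_of_eventuallyEq (hGg.eventuallyEq_of_mem (Ioo_mem_nhds hx.1 hx.2))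
  rw [← integral_Ioc_eq_integral_Ioo, ← intervalIntegral.integral_of_le hab.le,
    intervalIntegral.integral_eq_sub_of_hasDerivAt_of_le hab.le hG hGderiv
      ((intervalIntegrable_iff_integrableOn_Ioo_of_le hab.le).2 hg'), hGa, hGb, sub_zero]

end BoundaryTerms

section GroundState

lemma two_mul_mul_le_sq_mul_add_sq_div (a b : ℝ) {s : ℝ} (hs : 0 < s) :
    2 * (a * b) ≤ b ^ 2 * s + a ^ 2 / s := by
  have hsq : b ^ 2 * s + a ^ 2 / s - 2 * (a * b) = (b * s - a) ^ 2 / s := by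
    field_simp
    ring
  have hnonneg : 0 ≤ (b * s - a) ^ 2 / s := by positivity
  linarith

lemma integrableOn_mul_sin_of_div_sin {g : ℝ → ℝ}
    (hg : IntegrableOn (fun x => g x / sin x) (Ioo 0 π)) :
    IntegrableOn (fun x => g x * sin x) (Ioo 0 π) := by
  have hmul : IntegrableOn (fun x => sin x ^ 2 * (g x / sin x)) (Ioo 0 π) :=
    Integrable.bdd_mul (c := 1) hg (by fun_prop)
      (ae_of_all _ fun x => by simpa using sin_sq_le_one x)
  refine hmul.congr_fun (fun x hx => ?_) measurableSet_Ioo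
  have hs : sin x ≠ 0 := (sin_pos_of_mem_Ioo hx).ne'
  field_simp

variable {E : Type*} [NormedAddCommGroup E] [InnerProductSpace ℝ E]

lemma norm_sq_mul_sin_add_eq (m : ℝ) (v w : E) {x : ℝ} (hx : sin x ≠ 0) :
    ‖w‖ ^ 2 * sin x + m ^ 2 * (‖v‖ ^ 2 / sin x) =
      m * (m + 1) * (‖v‖ ^ 2 * sin x) + ‖w - (m * cot x) • v‖ ^ 2 * sin x +
        m * (-sin x * ‖v‖ ^ 2 + cos x * (2 * inner ℝ v w)) := by
  rw [norm_sub_sq_real, inner_smul_right, norm_smul, mul_pow, norm_eq_abs, sq_abs,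
    real_inner_comm, cot_eq_cos_div_sin]
  field_simp
  rw [cos_sq']
  ring

variable [CompleteSpace E] {f : ℝ → E}

lemma integrableOn_deriv_cos_mul_norm_sq (hf : DifferentiableOn ℝ f (Ioo 0 π))
    (hf' : IntegrableOn (fun x => ‖deriv f x‖ ^ 2 * sin x) (Ioo 0 π))
    (hfs : IntegrableOn (fun x => ‖f x‖ ^ 2 / sin x) (Ioo 0 π)) :
    IntegrableOn (fun x => -sin x * ‖f x‖ ^ 2 + cos x * (2 * inner ℝ (f x) (deriv f x)))
      (Ioo 0 π) := by
  have hf_meas : AEStronglyMeasurable f (volume.restrict (Ioo 0 π)) :=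
    hf.continuousOn.aestronglyMeasurable measurableSet_Ioo
  have hf'_meas : AEStronglyMeasurable (deriv f) (volume.restrict (Ioo 0 π)) :=
    aestronglyMeasurable_deriv f _
  refine Integrable.mono' ((integrableOn_mul_sin_of_div_sin hfs).add (hf'.add hfs)) ?_ ?_
  · exact (continuous_sin.neg.aestronglyMeasurable.mul (hf_meas.norm.pow 2)).add
      (continuous_cos.aestronglyMeasurable.mul ((hf_meas.inner hf'_meas).const_mul 2))
  · filter_upwards [ae_restrict_mem measurableSet_Ioo] with x hx
    have hs : 0 < sin x := sin_pos_of_mem_Ioo hx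
    calc ‖-sin x * ‖f x‖ ^ 2 + cos x * (2 * inner ℝ (f x) (deriv f x))‖
        ≤ ‖-sin x * ‖f x‖ ^ 2‖ + ‖cos x * (2 * inner ℝ (f x) (deriv f x))‖ := norm_add_le _ _
      _ = ‖f x‖ ^ 2 * sin x + |cos x| * (2 * |inner ℝ (f x) (deriv f x)|) := by
          simp [abs_of_pos hs, mul_comm]
      _ ≤ ‖f x‖ ^ 2 * sin x + 1 * (2 * (‖f x‖ * ‖deriv f x‖)) := by
          gcongr
          exacts [abs_cos_le_one x, abs_real_inner_le_norm _ _]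
      _ ≤ ‖f x‖ ^ 2 * sin x + (‖deriv f x‖ ^ 2 * sin x + ‖f x‖ ^ 2 / sin x) := by
          rw [one_mul]
          gcongr
          exact two_mul_mul_le_sq_mul_add_sq_div _ _ hs

lemma setIntegral_deriv_cos_mul_norm_sq_eq_zero (hf : DifferentiableOn ℝ f (Ioo 0 π))
    (hf' : IntegrableOn (fun x => ‖deriv f x‖ ^ 2 * sin x) (Ioo 0 π))
    (hfs : IntegrableOn (fun x => ‖f x‖ ^ 2 / sin x) (Ioo 0 π)) :
    ∫ x in Ioo 0 π, (-sin x * ‖f x‖ ^ 2 + cos x * (2 * inner ℝ (f x) (deriv f x))) = 0 := by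
  refine setIntegral_deriv_eq_zero_of_integrableOn_div (g := fun x => cos x * ‖f x‖ ^ 2)
    pi_pos (fun x hx => ?_) (integrableOn_deriv_cos_mul_norm_sq hf hf' hfs)
    differentiableAt_sin sin_zero differentiableAt_sin sin_pi
    (fun x hx => (sin_pos_of_mem_Ioo hx).ne') ?_
  · exact (hasDerivAt_cos x).mul
      (hf.differentiableAt (Ioo_mem_nhds hx.1 hx.2)).hasDerivAt.norm_sq
  · simp only [mul_div_assoc]
    exact Integrable.bdd_mul hfs continuous_cos.aestronglyMeasurable
      (ae_of_all _ fun x => abs_cos_le_one x)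

lemma setIntegral_deriv_sq_add_div_sin_eq (m : ℝ) (hf : DifferentiableOn ℝ f (Ioo 0 π))
    (hf' : IntegrableOn (fun x => ‖deriv f x‖ ^ 2 * sin x) (Ioo 0 π))
    (hfs : IntegrableOn (fun x => ‖f x‖ ^ 2 / sin x) (Ioo 0 π)) :
    ∫ x in Ioo 0 π, (‖deriv f x‖ ^ 2 * sin x + m ^ 2 * (‖f x‖ ^ 2 / sin x)) =
      m * (m + 1) * (∫ x in Ioo 0 π, ‖f x‖ ^ 2 * sin x) +
        ∫ x in Ioo 0 π, ‖deriv f x - (m * cot x) • f x‖ ^ 2 * sin x := by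
  have henergy : IntegrableOn (fun x => ‖deriv f x‖ ^ 2 * sin x + m ^ 2 * (‖f x‖ ^ 2 / sin x))
      (Ioo 0 π) := hf'.add (hfs.const_mul (m ^ 2))
  have hmass := (integrableOn_mul_sin_of_div_sin hfs).const_mul (m * (m + 1))
  have hbdry := (integrableOn_deriv_cos_mul_norm_sq hf hf' hfs).const_mul m
  have hpointwise : ∀ x ∈ Ioo 0 π, ‖deriv f x - (m * cot x) • f x‖ ^ 2 * sin x =
      ‖deriv f x‖ ^ 2 * sin x + m ^ 2 * (‖f x‖ ^ 2 / sin x) -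
        m * (m + 1) * (‖f x‖ ^ 2 * sin x) -
        m * (-sin x * ‖f x‖ ^ 2 + cos x * (2 * inner ℝ (f x) (deriv f x))) := fun x hx => by
    rw [norm_sq_mul_sin_add_eq m (f x) (deriv f x) (sin_pos_of_mem_Ioo hx).ne']
    ring
  rw [setIntegral_congr_fun measurableSet_Ioo hpointwise,
    integral_sub ?_ hbdry, integral_sub henergy hmass, integral_const_mul m,
    setIntegral_deriv_cos_mul_norm_sq_eq_zero hf hf' hfs, integral_const_mul]
  · ring
  · exact henergy.sub hmass

lemma mul_setIntegral_norm_sq_mul_sin_le (m : ℝ) (hf : DifferentiableOn ℝ f (Ioo 0 π))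
    (hf' : IntegrableOn (fun x => ‖deriv f x‖ ^ 2 * sin x) (Ioo 0 π))
    (hfs : IntegrableOn (fun x => ‖f x‖ ^ 2 / sin x) (Ioo 0 π)) :
    m * (m + 1) * (∫ x in Ioo 0 π, ‖f x‖ ^ 2 * sin x) ≤
      ∫ x in Ioo 0 π, (‖deriv f x‖ ^ 2 * sin x + m ^ 2 * (‖f x‖ ^ 2 / sin x)) := by
  rw [setIntegral_deriv_sq_add_div_sin_eq m hf hf' hfs]
  refine le_add_of_nonneg_right (setIntegral_nonneg measurableSet_Ioo fun x hx => ?_)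
  exact mul_nonneg (sq_nonneg _) (sin_pos_of_mem_Ioo hx).le

end GroundState

section FourierGap

variable {a b : ℝ}

lemma memLp_restrict_Ioc_of_continuousOn_Icc {E : Type*} [NormedAddCommGroup E] {f : ℝ → E}
    (hf : ContinuousOn f (Icc a b)) (p : ENNReal) :
    MemLp f p (volume.restrict (Ioc a b)) := by
  obtain ⟨C, hC⟩ := isCompact_Icc.exists_bound_of_continuousOn hf
  refine MemLp.of_bound ((hf.mono Ioc_subset_Icc_self).aestronglyMeasurable measurableSet_Ioc) C ?_
  filter_upwards [ae_restrict_mem measurableSet_Ioc] with x hx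
  exact hC x (Ioc_subset_Icc_self hx)

variable {f f' g : ℝ → ℂ}

lemma fourierCoeffOn_sub (hab : a < b) (hf : IntervalIntegrable f volume a b)
    (hg : IntervalIntegrable g volume a b) (n : ℤ) :
    fourierCoeffOn hab (fun x => f x - g x) n =
      fourierCoeffOn hab f n - fourierCoeffOn hab g n := by
  have hfourier : Continuous fun x : ℝ => (fourier (-n) (x : AddCircle (b - a)) : ℂ) :=
    (map_continuous (fourier (-n))).comp (AddCircle.continuous_mk' _)
  simp only [fourierCoeffOn_eq_integral, smul_eq_mul, mul_sub]
  rw [intervalIntegral.integral_sub (hf.continuousOn_mul hfourier.continuousOn)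
    (hg.continuousOn_mul hfourier.continuousOn), smul_sub]

lemma fourierCoeffOn_deriv_of_eq_endpoints (hab : a < b)
    (hf : ∀ x ∈ uIcc a b, HasDerivAt f (f' x) x) (hf' : IntervalIntegrable f' volume a b)
    (hper : f b = f a) (n : ℤ) :
    fourierCoeffOn hab f' n = 2 * π * Complex.I * n / (b - a) * fourierCoeffOn hab f n := by
  rcases eq_or_ne n 0 with rfl | hn
  · have hftc : ∫ x in a..b, f' x = f b - f a :=
      intervalIntegral.integral_eq_sub_of_hasDerivAt hf hf'
    simp [fourierCoeffOn_eq_integral, hftc, hper]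
  · have hba : (b - a : ℂ) ≠ 0 := by exact_mod_cast (sub_pos.2 hab).ne'
    rw [fourierCoeffOn_of_hasDerivAt hab hn hf hf', hper]
    field_simp
    ring

lemma sq_mul_integral_norm_sq_le_of_eq_endpoints (hab : a < b)
    (hf : ∀ x ∈ uIcc a b, HasDerivAt f (f' x) x) (hf' : MemLp f' 2 (volume.restrict (Ioc a b)))
    (hper : f b = f a) {m ν : ℝ} (hm : ∀ n : ℤ, m ^ 2 ≤ (2 * π * n / (b - a) - ν) ^ 2) :
    m ^ 2 * ∫ x in a..b, ‖f x‖ ^ 2 ≤ ∫ x in a..b, ‖f' x - Complex.I * ν * f x‖ ^ 2 := by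
  have hf_cont : ContinuousOn f (Icc a b) := fun x hx =>
    (hf x (Icc_subset_uIcc hx)).continuousAt.continuousWithinAt
  have hf_memLp : MemLp f 2 (volume.restrict (Ioc a b)) :=
    memLp_restrict_Ioc_of_continuousOn_Icc hf_cont 2
  have hνf_memLp : MemLp (fun x => Complex.I * ν * f x) 2 (volume.restrict (Ioc a b)) :=
    hf_memLp.const_mul _
  have intervalIntegrable_of_memLp {g : ℝ → ℂ} (hg : MemLp g 2 (volume.restrict (Ioc a b))) :
      IntervalIntegrable g volume a b :=
    (intervalIntegrable_iff_integrableOn_Ioc_of_le hab.le).2 (hg.integrable one_le_two)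
  have hcoeff : ∀ n : ℤ, fourierCoeffOn hab (fun x => f' x - Complex.I * ν * f x) n =
      Complex.I * (2 * π * n / (b - a) - ν : ℝ) * fourierCoeffOn hab f n := fun n => by
    rw [fourierCoeffOn_sub hab (intervalIntegrable_of_memLp hf')
      (intervalIntegrable_of_memLp hνf_memLp), fourierCoeffOn.const_mul,
      fourierCoeffOn_deriv_of_eq_endpoints hab hf (intervalIntegrable_of_memLp hf') hper]
    push_cast
    ring
  have hcoeff_le : ∀ n : ℤ, m ^ 2 * ‖fourierCoeffOn hab f n‖ ^ 2 ≤
      ‖fourierCoeffOn hab (fun x => f' x - Complex.I * ν * f x) n‖ ^ 2 := fun n => by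
    rw [hcoeff, norm_mul, norm_mul, Complex.norm_I, one_mul, mul_pow, Complex.norm_real,
      norm_eq_abs, sq_abs]
    exact mul_le_mul_of_nonneg_right (hm n) (sq_nonneg _)
  have hparseval := hasSum_le hcoeff_le
    ((hasSum_sq_fourierCoeffOn hab hf_memLp).mul_left (m ^ 2))
    (hasSum_sq_fourierCoeffOn hab (hf'.sub hνf_memLp))
  rw [smul_eq_mul, smul_eq_mul, mul_left_comm] at hparseval
  exact le_of_mul_le_mul_left hparseval (inv_pos.2 (sub_pos.2 hab))

end FourierGap

section SinRpow

lemma hasDerivAt_cos_mul_sin_rpow (p : ℝ) {x : ℝ} (hx : 0 < sin x) :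
    HasDerivAt (fun x => cos x * sin x ^ p)
      (p * sin x ^ (p - 1) - (p + 1) * sin x ^ (p + 1)) x := by
  have hprod := (hasDerivAt_cos x).mul ((hasDerivAt_sin x).rpow_const (p := p) (Or.inl hx.ne'))
  convert! hprod using 1
  rw [rpow_add_one hx.ne', rpow_sub_one hx.ne']
  field_simp
  rw [cos_sq']
  ring

lemma integrableOn_sin_rpow {q : ℝ} (hq : -1 < q) :
    IntegrableOn (fun x => sin x ^ q) (Ioo 0 π) := by
  -- The derivative of `x + cos x * sin x ^ p` is nonnegative, hence integrable, and differs from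
  -- `p * sin x ^ (p - 1)` by a bounded function.
  obtain ⟨p, hp, rfl⟩ : ∃ p, 0 < p ∧ p - 1 = q := ⟨q + 1, by linarith, by ring⟩
  have hcont {r : ℝ} (hr : 0 ≤ r) : Continuous fun x => sin x ^ r :=
    continuous_sin.rpow_const fun _ => Or.inr hr
  have hderiv : ∀ x ∈ Ioo 0 π, HasDerivAt (fun x => x + cos x * sin x ^ p)
      (1 + (p * sin x ^ (p - 1) - (p + 1) * sin x ^ (p + 1))) x := fun x hx =>
    (hasDerivAt_id x).add (hasDerivAt_cos_mul_sin_rpow p (sin_pos_of_mem_Ioo hx))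
  have hderiv_nonneg : ∀ x ∈ Ioo 0 π,
      0 ≤ 1 + (p * sin x ^ (p - 1) - (p + 1) * sin x ^ (p + 1)) := fun x hx => by
    have hs := sin_pos_of_mem_Ioo hx
    have hle_one : sin x ^ (p + 1) ≤ 1 := rpow_le_one hs.le (sin_le_one x) (by linarith)
    have hle : sin x ^ (p + 1) ≤ sin x ^ (p - 1) :=
      rpow_le_rpow_of_exponent_ge hs (sin_le_one x) (by linarith)
    nlinarith
  have hderiv_int : IntegrableOn
      (fun x => 1 + (p * sin x ^ (p - 1) - (p + 1) * sin x ^ (p + 1))) (Ioo 0 π) :=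
    (intervalIntegral.integrableOn_deriv_of_nonneg
      (continuous_id.add (continuous_cos.mul (hcont hp.le))).continuousOn
      hderiv hderiv_nonneg).mono_set Ioo_subset_Ioc_self
  have hrest_int : IntegrableOn (fun x => (p + 1) * sin x ^ (p + 1) - 1) (Ioo 0 π) :=
    Continuous.integrableOn_Ioc (((hcont (by linarith)).const_mul _).sub continuous_const)
      |>.mono_set Ioo_subset_Ioc_self
  refine ((hderiv_int.add hrest_int).const_mul p⁻¹).congr (ae_of_all _ fun x => ?_)
  simp only [Pi.add_apply]
  field_simp
  ring

end SinRpow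

section ProductIntegrals

variable {α β : Type*} [MeasurableSpace α] [MeasurableSpace β] {μ : Measure α} {ν : Measure β}
  [SFinite ν]

lemma integrable_prod_of_integral_norm_le {E : Type*} [NormedAddCommGroup E]
    {F : α × β → E} {G : α × β → ℝ} (hF : AEStronglyMeasurable F (μ.prod ν))
    (hF_slice : ∀ᵐ x ∂μ, Integrable (fun y => F (x, y)) ν) (hG : Integrable G (μ.prod ν))
    (hle : ∀ᵐ x ∂μ, ∫ y, ‖F (x, y)‖ ∂ν ≤ ∫ y, G (x, y) ∂ν) : Integrable F (μ.prod ν) := by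
  refine (integrable_prod_iff hF).2 ⟨hF_slice, ?_⟩
  refine hG.integral_prod_left.mono' hF.norm.integral_prod_right' ?_
  filter_upwards [hle] with x hx
  rwa [norm_of_nonneg (integral_nonneg fun y => norm_nonneg _)]

variable [SFinite μ] {F G : α × β → ℝ}

lemma integral_prod_mono_of_slice_fst (hF : Integrable F (μ.prod ν))
    (hG : Integrable G (μ.prod ν))
    (hle : ∀ᵐ x ∂μ, ∫ y, F (x, y) ∂ν ≤ ∫ y, G (x, y) ∂ν) :
    ∫ p, F p ∂μ.prod ν ≤ ∫ p, G p ∂μ.prod ν := by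
  rw [integral_prod _ hF, integral_prod _ hG]
  exact integral_mono_ae hF.integral_prod_left hG.integral_prod_left hle

lemma integral_prod_mono_of_slice_snd (hF : Integrable F (μ.prod ν))
    (hG : Integrable G (μ.prod ν))
    (hle : ∀ᵐ y ∂ν, ∫ x, F (x, y) ∂μ ≤ ∫ x, G (x, y) ∂μ) :
    ∫ p, F p ∂μ.prod ν ≤ ∫ p, G p ∂μ.prod ν := by
  rw [← integral_prod_swap F, ← integral_prod_swap G]
  exact integral_prod_mono_of_slice_fst hF.swap hG.swap hle

end ProductIntegrals

section PartialDerivatives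

variable {E : Type*} [NormedAddCommGroup E] [NormedSpace ℝ E] {u : ℝ → ℝ → E} {s : Set (ℝ × ℝ)}

lemma hasDerivAt_fst_of_differentiableAt_uncurry {p : ℝ × ℝ}
    (hu : DifferentiableAt ℝ (Function.uncurry u) p) :
    HasDerivAt (fun r => u r p.2) (fderiv ℝ (Function.uncurry u) p (1, 0)) p.1 :=
  HasFDerivAt.comp_hasDerivAt (f := fun r => (r, p.2)) p.1 hu.hasFDerivAt
    ((hasDerivAt_id p.1).prodMk (hasDerivAt_const p.1 p.2))

lemma hasDerivAt_snd_of_differentiableAt_uncurry {p : ℝ × ℝ}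
    (hu : DifferentiableAt ℝ (Function.uncurry u) p) :
    HasDerivAt (fun t => u p.1 t) (fderiv ℝ (Function.uncurry u) p (0, 1)) p.2 :=
  HasFDerivAt.comp_hasDerivAt (f := fun t => (p.1, t)) p.2 hu.hasFDerivAt
    ((hasDerivAt_const p.2 p.1).prodMk (hasDerivAt_id p.2))

lemma continuousOn_deriv_fst (hs : IsOpen s) (hu : ContDiffOn ℝ 1 (Function.uncurry u) s) :
    ContinuousOn (fun p : ℝ × ℝ => deriv (fun r => u r p.2) p.1) s := by
  refine ContinuousOn.congr (f := fun p => fderiv ℝ (Function.uncurry u) p (1, 0))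
    ((hu.continuousOn_fderiv_of_isOpen hs le_rfl).clm_apply continuousOn_const) fun p hp => ?_
  exact (hasDerivAt_fst_of_differentiableAt_uncurry
    ((hu.differentiableOn one_ne_zero).differentiableAt (hs.mem_nhds hp))).deriv

lemma continuousOn_deriv_snd (hs : IsOpen s) (hu : ContDiffOn ℝ 1 (Function.uncurry u) s) :
    ContinuousOn (fun p : ℝ × ℝ => deriv (fun t => u p.1 t) p.2) s := by
  refine ContinuousOn.congr (f := fun p => fderiv ℝ (Function.uncurry u) p (0, 1))
    ((hu.continuousOn_fderiv_of_isOpen hs le_rfl).clm_apply continuousOn_const) fun p hp => ?_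
  exact (hasDerivAt_snd_of_differentiableAt_uncurry
    ((hu.differentiableOn one_ne_zero).differentiableAt (hs.mem_nhds hp))).deriv

end PartialDerivatives

section Positivity

lemma setIntegral_pos_of_continuousOn_of_ne_zero {X : Type*} [TopologicalSpace X]
    [MeasurableSpace X] [OpensMeasurableSpace X] {μ : Measure X} [μ.IsOpenPosMeasure]
    {F : X → ℝ} {U : Set X} (hU : IsOpen U) (hF : ContinuousOn F U) (hF_int : IntegrableOn F U μ)
    (hF_nonneg : ∀ x ∈ U, 0 ≤ F x) {x : X} (hx : x ∈ U) (hFx : F x ≠ 0) :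
    0 < ∫ x in U, F x ∂μ := by
  have hF_nonneg_ae : 0 ≤ᵐ[μ.restrict U] F := ae_restrict_of_forall_mem hU.measurableSet hF_nonneg
  refine (integral_nonneg_of_ae hF_nonneg_ae).lt_of_ne fun hzero => hFx ?_
  have hF_ae_zero := (integral_eq_zero_iff_of_nonneg_ae hF_nonneg_ae hF_int).1 hzero.symm
  exact Measure.eqOn_open_of_ae_eq hF_ae_zero hU hF continuousOn_const hx

lemma eq_of_periodic_of_eqOn_Ioo {X : Type*} [TopologicalSpace X] [T2Space X] {f : ℝ → X}
    {T : ℝ} {c : X} (hf : Continuous f) (hper : Function.Periodic f T) (hT : 0 < T)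
    (hfc : EqOn f (fun _ => c) (Ioo 0 T)) (t : ℝ) : f t = c := by
  have hfc_Icc := hfc.closure hf continuous_const
  rw [closure_Ioo hT.ne] at hfc_Icc
  obtain ⟨y, hy, hty⟩ := hper.exists_mem_Ico₀ hT t
  exact hty.trans (hfc_Icc (Ico_subset_Icc_self hy))

end Positivity

/-- The coordinate rectangle over which the integrals in `MagAdmissible` and `magQuot` are taken. -/
abbrev polarRect (R : ℝ) : Set (ℝ × ℝ) := Ioo 0 R ×ˢ Ioo 0 (2 * π)

/-- The density `|∂_r u|² sin r` of the radial part of the magnetic energy. -/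
noncomputable def radialEnergyIntegrand (u : ℝ → ℝ → ℂ) (p : ℝ × ℝ) : ℝ :=
  ‖deriv (fun s => u s p.2) p.1‖ ^ 2 * sin p.1

/-- The density `|∂_θ u - iνu|² / sin r` of the angular part of the magnetic energy; one factor
`sin r` of the volume element is cancelled against `1 / sin² r`. -/
noncomputable def angularEnergyIntegrand (ν : ℝ) (u : ℝ → ℝ → ℂ) (p : ℝ × ℝ) : ℝ :=
  ‖deriv (fun t => u p.1 t) p.2 - Complex.I * ν * u p.1 p.2‖ ^ 2 / sin p.1

/-- The density `|u|² / sin r` of the centrifugal potential, which interpolates between the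
angular energy and the mass. -/
noncomputable def centrifugalIntegrand (u : ℝ → ℝ → ℂ) (p : ℝ × ℝ) : ℝ :=
  ‖u p.1 p.2‖ ^ 2 / sin p.1

lemma magEnergyIntegrand_eq_add (ν : ℝ) (u : ℝ → ℝ → ℂ) :
    magEnergyIntegrand ν u = radialEnergyIntegrand u + angularEnergyIntegrand ν u := by
  ext p
  rcases eq_or_ne (sin p.1) 0 with hs | hs
  · simp [magEnergyIntegrand, radialEnergyIntegrand, angularEnergyIntegrand, hs]
  · simp only [magEnergyIntegrand, radialEnergyIntegrand, angularEnergyIntegrand, Pi.add_apply]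
    field_simp

lemma isOpen_polarRect (R : ℝ) : IsOpen (polarRect R) := isOpen_Ioo.prod isOpen_Ioo

lemma polarRect_subset_strip (R : ℝ) : polarRect R ⊆ Ioo 0 R ×ˢ univ :=
  prod_mono Subset.rfl (subset_univ _)

lemma volume_restrict_polarRect (R : ℝ) :
    (volume : Measure (ℝ × ℝ)).restrict (polarRect R) =
      (volume.restrict (Ioo 0 R)).prod (volume.restrict (Ioo 0 (2 * π))) := by
  rw [Measure.prod_restrict, ← Measure.volume_eq_prod]

lemma sin_pos_of_mem_Ioo_of_le_pi {R r : ℝ} (hR : R ≤ π) (hr : r ∈ Ioo 0 R) : 0 < sin r :=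
  sin_pos_of_pos_of_lt_pi hr.1 (hr.2.trans_le hR)

namespace MagAdmissible

variable {R ν : ℝ} {u : ℝ → ℝ → ℂ}

lemma contDiffOn_one (hu : MagAdmissible R ν u) :
    ContDiffOn ℝ 1 (Function.uncurry u) (Ioo 0 R ×ˢ univ) :=
  hu.1.of_le (by exact_mod_cast le_top)

lemma differentiableAt (hu : MagAdmissible R ν u) {r : ℝ} (hr : r ∈ Ioo 0 R) (θ : ℝ) :
    DifferentiableAt ℝ (Function.uncurry u) (r, θ) :=
  (hu.contDiffOn_one.differentiableOn one_ne_zero).differentiableAt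
    ((isOpen_Ioo.prod isOpen_univ).mem_nhds ⟨hr, mem_univ θ⟩)

lemma continuous_slice (hu : MagAdmissible R ν u) {r : ℝ} (hr : r ∈ Ioo 0 R) :
    Continuous fun θ => u r θ :=
  hu.1.continuousOn.comp_continuous (f := fun θ => (r, θ)) (by fun_prop)
    fun θ => ⟨hr, mem_univ θ⟩

lemma continuous_deriv_slice (hu : MagAdmissible R ν u) {r : ℝ} (hr : r ∈ Ioo 0 R) :
    Continuous (deriv fun θ => u r θ) :=
  (continuousOn_deriv_snd (isOpen_Ioo.prod isOpen_univ) hu.contDiffOn_one).comp_continuous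
    (f := fun θ => (r, θ)) (by fun_prop) fun θ => ⟨hr, mem_univ θ⟩

lemma exists_mem_polarRect_ne_zero (hu : MagAdmissible R ν u) :
    ∃ p ∈ polarRect R, u p.1 p.2 ≠ 0 := by
  by_contra! hzero
  refine hu.2.2.1 fun r hr => ?_
  exact eq_of_periodic_of_eqOn_Ioo (hu.continuous_slice hr) (hu.2.1 r) two_pi_pos
    fun θ hθ => hzero (r, θ) ⟨hr, hθ⟩

lemma setIntegral_norm_sq_mul_sin_pos (hu : MagAdmissible R ν u) (hR : R ≤ π) :
    0 < ∫ p in polarRect R, ‖u p.1 p.2‖ ^ 2 * sin p.1 := by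
  obtain ⟨p, hp, hup⟩ := hu.exists_mem_polarRect_ne_zero
  have hcont : ContinuousOn (fun p : ℝ × ℝ => ‖u p.1 p.2‖ ^ 2 * sin p.1) (polarRect R) :=
    ((hu.1.continuousOn.mono (polarRect_subset_strip R)).norm.pow 2).mul (by fun_prop)
  refine setIntegral_pos_of_continuousOn_of_ne_zero (isOpen_polarRect R) hcont hu.2.2.2.2
    (fun q hq => ?_) hp ?_
  · exact mul_nonneg (sq_nonneg _) (sin_pos_of_mem_Ioo_of_le_pi hR hq.1).le
  · exact mul_ne_zero (pow_ne_zero 2 (norm_ne_zero_iff.2 hup))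
      (sin_pos_of_mem_Ioo_of_le_pi hR hp.1).ne'

lemma integrableOn_energy_parts (hu : MagAdmissible R ν u) (hR : R ≤ π) :
    IntegrableOn (radialEnergyIntegrand u) (polarRect R) ∧
      IntegrableOn (angularEnergyIntegrand ν u) (polarRect R) := by
  have hmeas := (isOpen_polarRect R).measurableSet
  have hradial_cont : ContinuousOn (radialEnergyIntegrand u) (Ioo 0 R ×ˢ univ) :=
    ((continuousOn_deriv_fst (isOpen_Ioo.prod isOpen_univ) hu.contDiffOn_one).norm.pow 2).mul
      (by fun_prop)
  refine (integrable_add_iff_of_nonneg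
    ((hradial_cont.mono (polarRect_subset_strip R)).aestronglyMeasurable hmeas)
    (ae_restrict_of_forall_mem hmeas fun p hp => ?_)
    (ae_restrict_of_forall_mem hmeas fun p hp => ?_)).1
    (magEnergyIntegrand_eq_add ν u ▸ hu.2.2.2.1)
  · exact mul_nonneg (sq_nonneg _) (sin_pos_of_mem_Ioo_of_le_pi hR hp.1).le
  · exact div_nonneg (sq_nonneg _) (sin_pos_of_mem_Ioo_of_le_pi hR hp.1).le

variable {m : ℝ}

lemma sq_mul_integral_centrifugal_slice_le (hu : MagAdmissible R ν u) (hR : R ≤ π)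
    (hm : ∀ n : ℤ, m ^ 2 ≤ (n - ν) ^ 2) {r : ℝ} (hr : r ∈ Ioo 0 R) :
    ∫ θ in Ioo 0 (2 * π), m ^ 2 * centrifugalIntegrand u (r, θ) ≤
      ∫ θ in Ioo 0 (2 * π), angularEnergyIntegrand ν u (r, θ) := by
  have hgap := sq_mul_integral_norm_sq_le_of_eq_endpoints two_pi_pos
    (f := fun θ => u r θ) (f' := deriv fun θ => u r θ) (m := m) (ν := ν)
    (fun θ _ => (hasDerivAt_snd_of_differentiableAt_uncurry
      (hu.differentiableAt hr θ)).differentiableAt.hasDerivAt)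
    (memLp_restrict_Ioc_of_continuousOn_Icc (hu.continuous_deriv_slice hr).continuousOn 2)
    (by simpa using hu.2.1 r 0)
    (fun n => by simpa [two_pi_pos.ne'] using hm n)
  simp only [intervalIntegral.integral_of_le two_pi_pos.le, integral_Ioc_eq_integral_Ioo] at hgap
  simp only [centrifugalIntegrand, angularEnergyIntegrand]
  rw [integral_const_mul, integral_div, integral_div, ← mul_div_assoc]
  exact div_le_div_of_nonneg_right hgap (sin_pos_of_mem_Ioo_of_le_pi hR hr).le

lemma integrableOn_sq_mul_centrifugal (hu : MagAdmissible R ν u) (hR : R ≤ π)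
    (hm : ∀ n : ℤ, m ^ 2 ≤ (n - ν) ^ 2) :
    IntegrableOn (fun p => m ^ 2 * centrifugalIntegrand u p) (polarRect R) := by
  have hcont : ContinuousOn (fun p => m ^ 2 * centrifugalIntegrand u p) (polarRect R) :=
    continuousOn_const.mul (((hu.1.continuousOn.mono (polarRect_subset_strip R)).norm.pow 2).div
      (by fun_prop) fun p hp => (sin_pos_of_mem_Ioo_of_le_pi hR hp.1).ne')
  have hmeas := hcont.aestronglyMeasurable (μ := volume) (isOpen_polarRect R).measurableSet
  have hangular := (hu.integrableOn_energy_parts hR).2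
  rw [IntegrableOn, volume_restrict_polarRect] at hangular ⊢
  rw [volume_restrict_polarRect] at hmeas
  refine integrable_prod_of_integral_norm_le hmeas ?_ hangular ?_ <;>
    filter_upwards [ae_restrict_mem measurableSet_Ioo] with r hr
  · have hslice : Continuous fun θ => m ^ 2 * centrifugalIntegrand u (r, θ) :=
      (((hu.continuous_slice hr).norm.pow 2).div_const (sin r)).const_mul (m ^ 2)
    exact hslice.integrableOn_Ioc.mono_set Ioo_subset_Ioc_self
  · have hs := sin_pos_of_mem_Ioo_of_le_pi hR hr
    have hnorm : ∀ θ, ‖m ^ 2 * centrifugalIntegrand u (r, θ)‖ =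
        m ^ 2 * centrifugalIntegrand u (r, θ) := fun θ =>
      norm_of_nonneg (mul_nonneg (sq_nonneg m) (div_nonneg (sq_nonneg _) hs.le))
    simpa only [hnorm] using hu.sq_mul_integral_centrifugal_slice_le hR hm hr

lemma mul_setIntegral_le_setIntegral_radial_add_centrifugal (hu : MagAdmissible π ν u)
    (hm0 : m ≠ 0) (hm : ∀ n : ℤ, m ^ 2 ≤ (n - ν) ^ 2) :
    m * (m + 1) * (∫ p in polarRect π, ‖u p.1 p.2‖ ^ 2 * sin p.1) ≤
      ∫ p in polarRect π, (radialEnergyIntegrand u p + m ^ 2 * centrifugalIntegrand u p) := by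
  have hmass := hu.2.2.2.2
  have hradial := (hu.integrableOn_energy_parts le_rfl).1
  have hcentrifugal := hu.integrableOn_sq_mul_centrifugal le_rfl hm
  rw [IntegrableOn, volume_restrict_polarRect] at hmass hradial hcentrifugal
  rw [← integral_const_mul, volume_restrict_polarRect]
  refine integral_prod_mono_of_slice_snd (hmass.const_mul _) (hradial.add hcentrifugal) ?_
  filter_upwards [hradial.prod_left_ae, hcentrifugal.prod_left_ae] with θ hradial_θ hcentrifugal_θ
  rw [integral_const_mul]
  refine mul_setIntegral_norm_sq_mul_sin_le m (f := fun r => u r θ) (fun r hr => ?_) hradial_θ ?_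
  · exact (hasDerivAt_fst_of_differentiableAt_uncurry
      (hu.differentiableAt hr θ)).differentiableAt.differentiableWithinAt
  · exact (integrable_const_mul_iff (pow_ne_zero 2 hm0).isUnit _).1 hcentrifugal_θ

lemma setIntegral_sq_mul_centrifugal_le (hu : MagAdmissible R ν u) (hR : R ≤ π)
    (hm : ∀ n : ℤ, m ^ 2 ≤ (n - ν) ^ 2) :
    ∫ p in polarRect R, m ^ 2 * centrifugalIntegrand u p ≤
      ∫ p in polarRect R, angularEnergyIntegrand ν u p := by
  have hangular := (hu.integrableOn_energy_parts hR).2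
  have hcentrifugal := hu.integrableOn_sq_mul_centrifugal hR hm
  rw [IntegrableOn, volume_restrict_polarRect] at hangular hcentrifugal
  rw [volume_restrict_polarRect]
  refine integral_prod_mono_of_slice_fst hcentrifugal hangular ?_
  filter_upwards [ae_restrict_mem measurableSet_Ioo] with r hr
  exact hu.sq_mul_integral_centrifugal_slice_le hR hm hr

lemma mul_add_one_le_magQuot (hu : MagAdmissible π ν u) (hm0 : m ≠ 0)
    (hm : ∀ n : ℤ, m ^ 2 ≤ (n - ν) ^ 2) : m * (m + 1) ≤ magQuot π ν u := by
  obtain ⟨hradial, hangular⟩ := hu.integrableOn_energy_parts le_rfl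
  rw [magQuot, le_div_iff₀ (hu.setIntegral_norm_sq_mul_sin_pos le_rfl)]
  calc m * (m + 1) * ∫ p in polarRect π, ‖u p.1 p.2‖ ^ 2 * sin p.1
      ≤ ∫ p in polarRect π, (radialEnergyIntegrand u p + m ^ 2 * centrifugalIntegrand u p) :=
        hu.mul_setIntegral_le_setIntegral_radial_add_centrifugal hm0 hm
    _ = (∫ p in polarRect π, radialEnergyIntegrand u p) +
          ∫ p in polarRect π, m ^ 2 * centrifugalIntegrand u p :=
        integral_add hradial (hu.integrableOn_sq_mul_centrifugal le_rfl hm)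
    _ ≤ (∫ p in polarRect π, radialEnergyIntegrand u p) +
          ∫ p in polarRect π, angularEnergyIntegrand ν u p :=
        add_le_add_right (hu.setIntegral_sq_mul_centrifugal_le le_rfl hm) _
    _ = ∫ p in polarRect π, magEnergyIntegrand ν u p := by
        rw [magEnergyIntegrand_eq_add]
        exact (integral_add hradial hangular).symm

end MagAdmissible

section Radial

lemma integrableOn_polarRect_of_integrableOn_Ioo {R : ℝ} {g : ℝ → ℝ}
    (hg : IntegrableOn g (Ioo 0 R)) : IntegrableOn (fun p => g p.1) (polarRect R) := by
  rw [IntegrableOn, volume_restrict_polarRect]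
  exact Integrable.comp_fst hg _

lemma setIntegral_polarRect_fst (R : ℝ) (g : ℝ → ℝ) :
    ∫ p in polarRect R, g p.1 = 2 * π * ∫ r in Ioo 0 R, g r := by
  rw [volume_restrict_polarRect, integral_fun_fst]
  simp [two_pi_pos.le]

lemma magEnergyIntegrand_radial (ν : ℝ) (f : ℝ → ℂ) (p : ℝ × ℝ) :
    magEnergyIntegrand ν (fun r _ => f r) p =
      ‖deriv f p.1‖ ^ 2 * sin p.1 + ν ^ 2 * (‖f p.1‖ ^ 2 / sin p.1) := by
  simp [magEnergyIntegrand_eq_add, radialEnergyIntegrand, angularEnergyIntegrand, mul_pow,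
    mul_div_assoc]

variable {ν : ℝ} {f : ℝ → ℂ}

lemma magAdmissible_radial (hf : ContDiffOn ℝ (⊤ : ℕ∞) f (Ioo 0 π)) {r₀ : ℝ} (hr₀ : r₀ ∈ Ioo 0 π)
    (hfr₀ : f r₀ ≠ 0) (hf' : IntegrableOn (fun x => ‖deriv f x‖ ^ 2 * sin x) (Ioo 0 π))
    (hfs : IntegrableOn (fun x => ‖f x‖ ^ 2 / sin x) (Ioo 0 π)) :
    MagAdmissible π ν fun r _ => f r := by
  refine ⟨hf.comp contDiffOn_fst fun p hp => hp.1, fun _ _ => rfl,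
    fun hzero => hfr₀ (hzero r₀ hr₀ 0), ?_, ?_⟩
  · simp only [funext (magEnergyIntegrand_radial ν f)]
    exact integrableOn_polarRect_of_integrableOn_Ioo (hf'.add (hfs.const_mul (ν ^ 2)))
  · exact integrableOn_polarRect_of_integrableOn_Ioo (integrableOn_mul_sin_of_div_sin hfs)

lemma magQuot_radial (R ν : ℝ) (f : ℝ → ℂ) :
    magQuot R ν (fun r _ => f r) =
      (∫ x in Ioo 0 R, (‖deriv f x‖ ^ 2 * sin x + ν ^ 2 * (‖f x‖ ^ 2 / sin x))) /
        ∫ x in Ioo 0 R, ‖f x‖ ^ 2 * sin x := by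
  simp only [magQuot, magEnergyIntegrand_radial]
  rw [setIntegral_polarRect_fst R fun x => ‖deriv f x‖ ^ 2 * sin x + ν ^ 2 * (‖f x‖ ^ 2 / sin x),
    setIntegral_polarRect_fst R fun x => ‖f x‖ ^ 2 * sin x,
    mul_div_mul_left _ _ two_pi_pos.ne']

end Radial

section Eigenfunction

/-- The first eigenfunction `(sin r)^ν`, as a function of the distance to the pole. -/
noncomputable def sinRpow (ν r : ℝ) : ℂ := (sin r ^ ν : ℝ)

variable {ν : ℝ}

lemma hasDerivAt_sinRpow (ν : ℝ) {x : ℝ} (hx : 0 < sin x) :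
    HasDerivAt (sinRpow ν) ((ν * cot x) • sinRpow ν x) x := by
  have hreal := (hasDerivAt_sin x).rpow_const (p := ν) (Or.inl hx.ne')
  convert! hreal.ofReal_comp using 1
  rw [sinRpow, Complex.real_smul, ← Complex.ofReal_mul, cot_eq_cos_div_sin, rpow_sub_one hx.ne']
  congr 1
  ring

lemma contDiffOn_sinRpow (ν : ℝ) {n : WithTop ℕ∞} : ContDiffOn ℝ n (sinRpow ν) (Ioo 0 π) :=
  Complex.ofRealCLM.contDiff.comp_contDiffOn
    (contDiff_sin.contDiffOn.rpow_const_of_ne fun _ hx => (sin_pos_of_mem_Ioo hx).ne')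

lemma norm_sinRpow_sq_div_sin (ν : ℝ) {x : ℝ} (hx : 0 < sin x) :
    ‖sinRpow ν x‖ ^ 2 / sin x = sin x ^ (2 * ν - 1) := by
  rw [sinRpow, Complex.norm_real, norm_of_nonneg (rpow_nonneg hx.le ν), ← rpow_mul_natCast hx.le,
    rpow_sub_one hx.ne', Nat.cast_ofNat, mul_comm ν]

lemma integrableOn_norm_sinRpow_sq_div_sin (hν : 0 < ν) :
    IntegrableOn (fun x => ‖sinRpow ν x‖ ^ 2 / sin x) (Ioo 0 π) :=
  (integrableOn_sin_rpow (by linarith : -1 < 2 * ν - 1)).congr_fun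
    (fun _ hx => (norm_sinRpow_sq_div_sin ν (sin_pos_of_mem_Ioo hx)).symm) measurableSet_Ioo

lemma integrableOn_norm_deriv_sinRpow_sq_mul_sin (hν : 0 < ν) :
    IntegrableOn (fun x => ‖deriv (sinRpow ν) x‖ ^ 2 * sin x) (Ioo 0 π) := by
  have hbdd : IntegrableOn (fun x => cos x ^ 2 * (‖sinRpow ν x‖ ^ 2 / sin x)) (Ioo 0 π) :=
    Integrable.bdd_mul (c := 1) (integrableOn_norm_sinRpow_sq_div_sin hν) (by fun_prop)
      (ae_of_all _ fun x => by simpa using cos_sq_le_one x)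
  refine IntegrableOn.congr_fun (hbdd.const_mul (ν ^ 2)) (fun x hx => ?_) measurableSet_Ioo
  have hs := sin_pos_of_mem_Ioo hx
  rw [(hasDerivAt_sinRpow ν hs).deriv, norm_smul, mul_pow, norm_eq_abs, sq_abs, cot_eq_cos_div_sin]
  field_simp

lemma magAdmissible_sinRpow (hν : 0 < ν) : MagAdmissible π ν fun r _ => sinRpow ν r :=
  magAdmissible_radial (contDiffOn_sinRpow ν)
    (r₀ := π / 2) ⟨pi_div_two_pos, div_two_lt_of_pos pi_pos⟩ (by simp [sinRpow])
    (integrableOn_norm_deriv_sinRpow_sq_mul_sin hν) (integrableOn_norm_sinRpow_sq_div_sin hν)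

lemma magQuot_sinRpow (hν : 0 < ν) : magQuot π ν (fun r _ => sinRpow ν r) = ν * (ν + 1) := by
  have hremainder : ∫ x in Ioo 0 π,
      ‖deriv (sinRpow ν) x - (ν * cot x) • sinRpow ν x‖ ^ 2 * sin x = 0 :=
    setIntegral_eq_zero_of_forall_eq_zero fun x hx => by
      rw [(hasDerivAt_sinRpow ν (sin_pos_of_mem_Ioo hx)).deriv]
      simp
  have hmass : ∫ x in Ioo 0 π, ‖sinRpow ν x‖ ^ 2 * sin x ≠ 0 := fun hzero => by
    have hpos := (magAdmissible_sinRpow hν).setIntegral_norm_sq_mul_sin_pos le_rfl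
    rw [setIntegral_polarRect_fst π fun x => ‖sinRpow ν x‖ ^ 2 * sin x, hzero, mul_zero] at hpos
    exact hpos.false
  rw [magQuot_radial, setIntegral_deriv_sq_add_div_sin_eq ν
    ((contDiffOn_sinRpow ν (n := 1)).differentiableOn one_ne_zero)
    (integrableOn_norm_deriv_sinRpow_sq_mul_sin hν) (integrableOn_norm_sinRpow_sq_div_sin hν),
    hremainder, add_zero, mul_div_cancel_right₀ _ hmass]

end Eigenfunction

lemma sq_le_int_sub_sq {ν : ℝ} (hν0 : 0 ≤ ν) (hν : ν ≤ 1 / 2) (n : ℤ) :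
    ν ^ 2 ≤ (n - ν) ^ 2 := by
  rcases le_or_gt n 0 with hn | hn
  · have hn' : (n : ℝ) ≤ 0 := by exact_mod_cast hn
    nlinarith
  · have hn' : (1 : ℝ) ≤ n := by exact_mod_cast Int.add_one_le_of_lt hn
    nlinarith

/-- The first eigenvalue of the magnetic Laplacian on the round sphere `S²` with
Aharonov–Bohm potential of flux `ν ∈ (0, 1/2]` and two antipodal poles equals
`ν(ν+1)`, attained by `u(r, θ) = (sin r)^ν`. -/
theorem sphere_first_AB_eigenvalue (ν : ℝ) (hν : ν ∈ Ioc (0:ℝ) (1/2)) :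
    sInf { q | ∃ u : ℝ → ℝ → ℂ, MagAdmissible π ν u ∧ q = magQuot π ν u }
        = ν * (ν + 1) ∧
    MagAdmissible π ν (fun r _ => ((Real.sin r ^ ν : ℝ) : ℂ)) ∧
    magQuot π ν (fun r _ => ((Real.sin r ^ ν : ℝ) : ℂ)) = ν * (ν + 1) := by
  have hadm : MagAdmissible π ν fun r _ => sinRpow ν r := magAdmissible_sinRpow hν.1
  have hquot : magQuot π ν (fun r _ => sinRpow ν r) = ν * (ν + 1) := magQuot_sinRpow hν.1
  refine ⟨IsLeast.csInf_eq ⟨⟨_, hadm, hquot.symm⟩, ?_⟩, hadm, hquot⟩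
  rintro q ⟨u, hu, rfl⟩
  exact hu.mul_add_one_le_magQuot hν.1.ne' (sq_le_int_sub_sq hν.1.le hν.2)
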